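/- The alternating group A₅ on five letters (the subgroup of even permutations of a five-element type, e.g. alternatingGroup (Fin 5)) has Grossman's Property A: every class-preserving automorphism of A₅ is inner. -/

import Mathlib

/-- A group `G` has Grossman's Property A if every class-preserving automorphism
(i.e. one sending each element to a conjugate of itself) is inner. -/
def HasPropertyA (G : Type*) [Group G] : Prop :=
  ∀ φ : G ≃* G, (∀ g : G, IsConj g (φ g)) → ∃ h : G, ∀ g : G, φ g = h * g * h⁻¹

open Equiv Subgroup

/-- The involutions `x` of `S₅` such that `(0 1 2 3 4) * x` has cube one form a single orbit under
conjugation by the powers of the five-cycle `(0 1 2 3 4)`. -/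
theorem exists_finRotate_pow_conj_eq (x : Perm (Fin 5)) (hx : x ≠ 1) (hx2 : x * x = 1)
    (hx3 : finRotate 5 * x * (finRotate 5 * x) * (finRotate 5 * x) = 1) :
    ∃ i : Fin 5, x * finRotate 5 ^ (i : ℕ) =
      finRotate 5 ^ (i : ℕ) * (swap 0 1 * swap 2 3) := by
  revert x
  decide +kernel

/-- A subgroup of `A₅` containing elements of orders 2, 3 and 5 is the whole group. -/
theorem alternatingGroupFive_subgroup_eq_top (H : Subgroup (alternatingGroup (Fin 5)))
    {x y z : alternatingGroup (Fin 5)} (hx : x ∈ H) (hy : y ∈ H) (hz : z ∈ H)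
    (ox : orderOf x = 2) (oy : orderOf y = 3) (oz : orderOf z = 5) : H = ⊤ := by
  have h2 : 2 ∣ Nat.card H := (dvd_of_eq ox.symm).trans (H.orderOf_dvd_natCard hx)
  have h3 : 3 ∣ Nat.card H := (dvd_of_eq oy.symm).trans (H.orderOf_dvd_natCard hy)
  have h5 : 5 ∣ Nat.card H := (dvd_of_eq oz.symm).trans (H.orderOf_dvd_natCard hz)
  have hcard : Nat.card H * H.index = 60 := by
    rw [H.card_mul_index, nat_card_alternatingGroup, Nat.card_fin]
    rfl
  obtain ⟨k, hk⟩ : 30 ∣ Nat.card H := by omega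
  have hindex : k * H.index = 2 := by
    rw [hk, mul_assoc] at hcard
    omega
  rcases (Nat.dvd_prime Nat.prime_two).1 (Dvd.intro_left k hindex) with h | h
  · exact index_eq_one.1 h
  · refine (normal_of_index_eq_two h).eq_bot_or_eq_top.resolve_left ?_
    rintro rfl
    rw [mem_bot] at hx
    simp [hx] at ox

theorem alternatingGroupFive_propertyA : HasPropertyA ↥(alternatingGroup (Fin 5)) := by
  intro φ hφ
  let a : alternatingGroup (Fin 5) := ⟨finRotate 5, Perm.mem_alternatingGroup.2 (by decide)⟩
  let b : alternatingGroup (Fin 5) := ⟨swap 0 1 * swap 2 3, Perm.mem_alternatingGroup.2 (by decide)⟩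
  have : Fact (Nat.Prime 5) := ⟨Nat.prime_five⟩
  have oa : orderOf a = 5 := orderOf_eq_prime (by decide) (by decide)
  have ob : orderOf b = 2 := orderOf_eq_prime (by decide) (by decide)
  have oab : orderOf (a * b) = 3 := orderOf_eq_prime (by decide) (by decide)
  obtain ⟨c, hc⟩ := isConj_iff.1 (hφ a)
  let ψ : alternatingGroup (Fin 5) ≃* alternatingGroup (Fin 5) := φ.trans (MulAut.conj c⁻¹)
  have hψ (g) : ψ g = c⁻¹ * φ g * c := by simp [ψ]
  have hψa : ψ a = a := by rw [hψ, ← hc]; group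
  obtain ⟨i, hi⟩ := exists_finRotate_pow_conj_eq (ψ b)
    (by
      rw [Ne, OneMemClass.coe_eq_one, map_eq_one_iff ψ ψ.injective]
      decide)
    (by
      have h : ψ b * ψ b = 1 := by
        rw [← map_mul, ← pow_two, ← ob, pow_orderOf_eq_one, map_one]
      exact congrArg Subtype.val h)
    (by
      have h : a * ψ b * (a * ψ b) * (a * ψ b) = 1 := by
        nth_rewrite 1 2 3 [← hψa]
        simp only [← map_mul]
        rw [← pow_three', ← oab, pow_orderOf_eq_one, map_one]
      exact congrArg Subtype.val h)
  have hib : ψ b * a ^ (i : ℕ) = a ^ (i : ℕ) * b := Subtype.ext hi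
  let d := a ^ (i : ℕ)
  let H := ψ.toMonoidHom.eqLocus (MulAut.conj d).toMonoidHom
  have ha : a ∈ H := by
    change ψ a = d * a * d⁻¹
    rw [hψa, eq_mul_inv_iff_mul_eq]
    exact (Commute.refl a).pow_right _
  have hb : b ∈ H := by
    change ψ b = d * b * d⁻¹
    rw [eq_mul_inv_iff_mul_eq]
    exact hib
  have hH := alternatingGroupFive_subgroup_eq_top H hb (mul_mem ha hb) ha ob oab oa
  refine ⟨c * d, fun g => ?_⟩
  have hg : ψ g = d * g * d⁻¹ := (hH ▸ mem_top g : g ∈ H)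
  rw [hψ] at hg
  calc φ g = c * (c⁻¹ * φ g * c) * c⁻¹ := by group
    _ = c * d * g * (c * d)⁻¹ := by rw [hg]; group
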